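/- arXiv:math/0606092 — 3 statements merged into one kernel-verified Lean document; each statement's English description precedes it below -/
import Mathlib

section
/- Fix an integer k ≥ 1, a real number q with 0 < q ≤ 1, and a real constant Π_k > 0. A sequence (p_n)_{n≥0} of real numbers satisfies Σ_{j=0}^{k} [k choose j]_q q^{(k−j)(k−j−1)/2} p_{n−j} = (−1)^{n−k} q^{−k(n−k)} Π_k for all n ≥ k if and only if there exist constants C_1, …, C_k such that for all n ≥ 0, p_n = (−1)^{n−k} q^{−nk} q^{k(k+1)/2} ( [n choose k]_q + Σ_{r=1}^{k} C_r q^{nr} [n choose k−r]_q ) Π_k. -/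
/-- `[n]_q = 1 + q + ⋯ + q^{n-1}`. -/
noncomputable def qnum (q : ℝ) (n : ℕ) : ℝ := ∑ i ∈ Finset.range n, q ^ i

/-- `[n]_q! = [1]_q [2]_q ⋯ [n]_q`. -/
noncomputable def qfact (q : ℝ) (n : ℕ) : ℝ := ∏ i ∈ Finset.range n, qnum q (i + 1)

/-- q-binomial coefficient `[n choose k]_q`, with the convention that it is `0` for `k > n`. -/
noncomputable def qbinom (q : ℝ) (n k : ℕ) : ℝ :=
  if k ≤ n then qfact q n / (qfact q (n - k) * qfact q k) else 0

lemma qnum_pos' (q : ℝ) (hq0 : 0 < q) (n : ℕ) : 0 < qnum q (n + 1) := by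
  unfold qnum
  exact Finset.sum_pos (fun i _ => pow_pos hq0 i) ⟨0, by simp⟩

lemma qfact_pos' (q : ℝ) (hq0 : 0 < q) (n : ℕ) : 0 < qfact q n := by
  unfold qfact
  exact Finset.prod_pos (fun i _ => qnum_pos' q hq0 i)

lemma qfact_succ' (q : ℝ) (n : ℕ) : qfact q (n + 1) = qfact q n * qnum q (n + 1) := by
  unfold qfact
  rw [Finset.prod_range_succ]

lemma qnum_add' (q : ℝ) (a b : ℕ) : qnum q (a + b) = qnum q a + q ^ a * qnum q b := by
  unfold qnum
  rw [Finset.sum_range_add, Finset.mul_sum]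
  simp [pow_add]

lemma qbinom_zero' (q : ℝ) (hq0 : 0 < q) (n : ℕ) : qbinom q n 0 = 1 := by
  have := (qfact_pos' q hq0 n).ne'
  have h0 : qfact q 0 = 1 := by simp [qfact]
  simp [qbinom, h0, this]

lemma qbinom_self' (q : ℝ) (hq0 : 0 < q) (n : ℕ) : qbinom q n n = 1 := by
  have := (qfact_pos' q hq0 n).ne'
  have h0 : qfact q 0 = 1 := by simp [qfact]
  simp [qbinom, h0, this]

lemma qbinom_gt' (q : ℝ) (n k : ℕ) (h : n < k) : qbinom q n k = 0 := by
  simp [qbinom, h]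

lemma qbinom_add' (q : ℝ) (a b : ℕ) :
    qbinom q (a + b) a = qfact q (a + b) / (qfact q b * qfact q a) := by
  simp [qbinom]

lemma pascal1 (q : ℝ) (hq0 : 0 < q) (n k : ℕ) :
    qbinom q (n + 1) (k + 1) = qbinom q n k + q ^ (k + 1) * qbinom q n (k + 1) := by
  rcases lt_trichotomy n k with h | h | h
  · rw [qbinom_gt' q _ _ (by omega), qbinom_gt' q _ _ h, qbinom_gt' q n (k+1) (by omega)]; simp
  · subst h
    rw [qbinom_self' q hq0, qbinom_self' q hq0, qbinom_gt' q n (n+1) (by omega)]; simp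
  · obtain ⟨d, rfl⟩ : ∃ d, n = k + 1 + d := ⟨n - (k+1), by omega⟩
    have e1 := qbinom_add' q (k+1) (d+1)
    have e2 := qbinom_add' q k (d+1)
    have e3 := qbinom_add' q (k+1) d
    rw [show k + 1 + (d + 1) = k + 1 + d + 1 by ring] at e1
    rw [show k + (d + 1) = k + 1 + d by ring] at e2
    rw [e1, e2, e3, qfact_succ' q (k+1+d), qfact_succ' q k, qfact_succ' q d,
      show k + 1 + d + 1 = (k + 1) + (d + 1) by ring, qnum_add']
    have h1 := (qfact_pos' q hq0 k).ne'
    have h2 := (qfact_pos' q hq0 d).ne'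
    have h3 := (qnum_pos' q hq0 k).ne'
    have h4 := (qnum_pos' q hq0 d).ne'
    field_simp

lemma pascal2 (q : ℝ) (hq0 : 0 < q) (k i : ℕ) :
    qbinom q (k + i + 1) (k + 1) = qbinom q (k + i) (k + 1) + q ^ i * qbinom q (k + i) k := by
  rcases i with _ | d
  · rw [qbinom_gt' q (k + 0) (k+1) (by omega)]
    simp [qbinom_self' q hq0]
  · have e1 := qbinom_add' q (k+1) (d+1)
    have e2 := qbinom_add' q k (d+1)
    have e3 := qbinom_add' q (k+1) d
    rw [show k + 1 + (d + 1) = k + (d + 1) + 1 by ring] at e1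
    rw [show k + 1 + d = k + (d + 1) by ring] at e3
    rw [e1, e2, e3, qfact_succ' q (k+(d+1)), qfact_succ' q k, qfact_succ' q d,
      show k + (d + 1) + 1 = (d + 1) + (k + 1) by ring, qnum_add']
    have h1 := (qfact_pos' q hq0 k).ne'
    have h2 := (qfact_pos' q hq0 d).ne'
    have h3 := (qnum_pos' q hq0 k).ne'
    have h4 := (qnum_pos' q hq0 d).ne'
    field_simp

/-- The product of the operators `S - q^i`, `1 ≤ i ≤ k`, for the forward shift `S`. -/
noncomputable def TT (q : ℝ) : ℕ → (ℕ → ℝ) → ℕ → ℝ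
  | 0, a, n => a n
  | k + 1, a, n => TT q k (fun m => a (m + 1) - q ^ (k + 1) * a m) n

lemma TT_add (q : ℝ) (k : ℕ) (a b : ℕ → ℝ) (n : ℕ) :
    TT q k (fun m => a m + b m) n = TT q k a n + TT q k b n := by
  induction k generalizing a b with
  | zero => rfl
  | succ k ih =>
    simp only [TT]
    rw [← ih]
    congr 1
    funext m
    ring

lemma TT_smul (q : ℝ) (k : ℕ) (c : ℝ) (a : ℕ → ℝ) (n : ℕ) :
    TT q k (fun m => c * a m) n = c * TT q k a n := by
  induction k generalizing a with
  | zero => rfl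
  | succ k ih =>
    simp only [TT]
    rw [← ih]
    congr 1
    funext m
    ring

lemma TT_zero (q : ℝ) (k : ℕ) (n : ℕ) : TT q k (fun _ => 0) n = 0 := by
  have := TT_smul q k 0 (fun _ => 0) n
  simpa using this

lemma TT_sum (q : ℝ) (k : ℕ) (s : Finset ℕ) (f : ℕ → ℕ → ℝ) (n : ℕ) :
    TT q k (fun m => ∑ r ∈ s, f r m) n = ∑ r ∈ s, TT q k (f r) n := by
  classical
  induction s using Finset.induction_on with
  | empty => simpa using TT_zero q k n
  | insert a s ha ih =>
    simp only [Finset.sum_insert ha]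
    rw [TT_add, ih]

lemma TT_binom (q : ℝ) (hq0 : 0 < q) (k : ℕ) (n : ℕ) : TT q k (fun m => qbinom q m k) n = 1 := by
  induction k with
  | zero => simp [TT, qbinom_zero' q hq0]
  | succ k ih =>
    simp only [TT]
    rw [← ih]
    congr 1
    funext m
    rw [pascal1 q hq0]; ring

lemma TT_hom (q : ℝ) (hq0 : 0 < q) (r d : ℕ) (n : ℕ) :
    TT q (r + 1 + d) (fun m => q ^ (m * (r + 1)) * qbinom q m d) n = 0 := by
  induction d with
  | zero =>
    simp only [TT, Nat.add_zero, qbinom_zero' q hq0]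
    rw [← TT_zero q r n]
    congr 1
    funext m
    ring
  | succ d ih =>
    rw [← add_assoc]
    simp only [TT]
    rw [← mul_zero (q ^ (r + 1)), ← ih, ← TT_smul]
    congr 1
    funext m
    rw [pascal1 q hq0]; ring

lemma tri_succ (j : ℕ) : (j + 1) * (j + 1 + 1) / 2 = j * (j + 1) / 2 + (j + 1) := by
  rw [show (j + 1) * (j + 1 + 1) = j * (j + 1) + (j + 1) * 2 by ring]
  exact Nat.add_mul_div_right _ _ (by norm_num)

lemma TT_eq (q : ℝ) (hq0 : 0 < q) (k : ℕ) (a : ℕ → ℝ) (n : ℕ) :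
    TT q k a n = ∑ j ∈ Finset.range (k + 1),
      qbinom q k j * ((-1) ^ j * q ^ (j * (j + 1) / 2)) * a (n + k - j) := by
  induction k generalizing a with
  | zero => simp [TT, qbinom_zero' q hq0]
  | succ k ih =>
    simp only [TT]
    rw [ih]
    have e : ∀ j ∈ Finset.range (k + 1),
        qbinom q (k + 1) (j + 1) * ((-1) ^ (j + 1) * q ^ ((j + 1) * (j + 1 + 1) / 2)) *
          a (n + (k + 1) - (j + 1)) =
        qbinom q k (j + 1) * ((-1) ^ (j + 1) * q ^ ((j + 1) * (j + 1 + 1) / 2)) *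
          a (n + (k + 1) - (j + 1)) -
        q ^ (k + 1) * (qbinom q k j * ((-1) ^ j * q ^ (j * (j + 1) / 2)) * a (n + k - j)) := by
      intro j hj
      obtain ⟨i, rfl⟩ : ∃ i, k = j + i := ⟨k - j, by simp at hj; omega⟩
      rw [pascal2 q hq0, tri_succ, show n + (j + i + 1) - (j + 1) = n + (j + i) - j by omega]
      ring
    rw [Finset.sum_range_succ' _ (k + 1), Finset.sum_congr rfl e, Finset.sum_sub_distrib, ← Finset.mul_sum]
    have e2 := Finset.sum_range_succ' (fun j => qbinom q k j * ((-1) ^ j * q ^ (j * (j + 1) / 2)) *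
          a (n + (k + 1) - j)) (k + 1)
    rw [Finset.sum_range_succ, qbinom_gt' q k (k + 1) (by omega)] at e2
    have e3 : ∀ j ∈ Finset.range (k + 1),
        qbinom q k j * ((-1) ^ j * q ^ (j * (j + 1) / 2)) *
          (a (n + k - j + 1) - q ^ (k + 1) * a (n + k - j)) =
        qbinom q k j * ((-1) ^ j * q ^ (j * (j + 1) / 2)) * a (n + (k + 1) - j) -
        q ^ (k + 1) * (qbinom q k j * ((-1) ^ j * q ^ (j * (j + 1) / 2)) * a (n + k - j)) := by
      intro j hj
      simp at hj
      rw [show n + (k + 1) - j = n + k - j + 1 by omega]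
      ring
    rw [Finset.sum_congr rfl e3, Finset.sum_sub_distrib, ← Finset.mul_sum]
    rw [qbinom_zero' q hq0] at e2 ⊢
    linarith

lemma TT_unique (q : ℝ) (hq0 : 0 < q) (k : ℕ) (a b : ℕ → ℝ)
    (h : ∀ n, TT q k a n = TT q k b n) (h0 : ∀ n < k, a n = b n) (n : ℕ) : a n = b n := by
  induction n using Nat.strong_induction_on with
  | _ n ih =>
    by_cases hn : n < k
    · exact h0 n hn
    · obtain ⟨m, rfl⟩ : ∃ m, n = m + k := ⟨n - k, by omega⟩
      have := h m
      rw [TT_eq q hq0, TT_eq q hq0, Finset.sum_range_succ', Finset.sum_range_succ',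
        qbinom_zero' q hq0] at this
      have e : ∀ j ∈ Finset.range k,
          qbinom q k (j + 1) * ((-1) ^ (j + 1) * q ^ ((j + 1) * (j + 1 + 1) / 2)) *
            a (m + k - (j + 1)) =
          qbinom q k (j + 1) * ((-1) ^ (j + 1) * q ^ ((j + 1) * (j + 1 + 1) / 2)) *
            b (m + k - (j + 1)) := by
        intro j hj
        simp at hj
        rw [ih _ (by omega)]
      rw [Finset.sum_congr rfl e] at this
      simpa using this

lemma exists_coeff (q : ℝ) (hq0 : 0 < q) (k : ℕ) (d : ℕ → ℝ) (K : ℕ) :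
    ∃ D : ℕ → ℝ, ∀ n < K,
      ∑ m ∈ Finset.range K, D m * q ^ (n * (k - m)) * qbinom q n m = d n := by
  induction K with
  | zero => exact ⟨fun _ => 0, by simp⟩
  | succ K ih =>
    obtain ⟨D, hD⟩ := ih
    have hq := (pow_pos hq0 (K * (k - K))).ne'
    refine ⟨fun m => if m = K then
      (d K - ∑ m ∈ Finset.range K, D m * q ^ (K * (k - m)) * qbinom q K m) / q ^ (K * (k - K))
      else D m, ?_⟩
    intro n hn
    rw [Finset.sum_range_succ]
    have e : ∀ m ∈ Finset.range K, (if m = K then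
      (d K - ∑ m ∈ Finset.range K, D m * q ^ (K * (k - m)) * qbinom q K m) / q ^ (K * (k - K))
      else D m) * q ^ (n * (k - m)) * qbinom q n m =
        D m * q ^ (n * (k - m)) * qbinom q n m := by
      intro m hm
      simp at hm
      rw [if_neg (by omega)]
    rw [Finset.sum_congr rfl e]
    rcases Nat.lt_succ_iff_lt_or_eq.mp hn with h | h
    · rw [hD n h, qbinom_gt' q n K h]; simp
    · subst h
      beta_reduce
      rw [if_pos rfl, qbinom_self' q hq0, div_mul_cancel₀ _ hq]
      ring

lemma TT_sol (q : ℝ) (hq0 : 0 < q) (k : ℕ) (C : ℕ → ℝ) (n : ℕ) :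
    TT q k (fun n => qbinom q n k +
      ∑ r ∈ Finset.Icc 1 k, C r * q ^ (n * r) * qbinom q n (k - r)) n = 1 := by
  rw [TT_add, TT_binom q hq0, TT_sum, Finset.sum_eq_zero, add_zero]
  intro r hr
  simp at hr
  obtain ⟨s, rfl⟩ : ∃ s, r = s + 1 := ⟨r - 1, by omega⟩
  obtain ⟨d, rfl⟩ : ∃ d, k = s + 1 + d := ⟨k - (s + 1), by omega⟩
  simp only [Nat.add_sub_cancel_left, mul_assoc]
  rw [TT_smul, TT_hom q hq0, mul_zero]

lemma exp_id (i j : ℕ) :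
    i * (i - 1) / 2 + (i + j) * (i + j + 1) / 2 = i * (i + j) + j * (j + 1) / 2 := by
  have h1 : i * (i - 1) / 2 * 2 = i * (i - 1) :=
    Nat.div_mul_cancel (Nat.even_mul_pred_self i).two_dvd
  have h2 : (i + j) * (i + j + 1) / 2 * 2 = (i + j) * (i + j + 1) :=
    Nat.div_mul_cancel (Nat.even_mul_succ_self _).two_dvd
  have h3 : j * (j + 1) / 2 * 2 = j * (j + 1) :=
    Nat.div_mul_cancel (Nat.even_mul_succ_self _).two_dvd
  have h4 : i * (i - 1) + i = i * i := by
    rcases i with _ | i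
    · rfl
    · simp; ring
  nlinarith

lemma key (q : ℝ) (hq0 : 0 < q) (k : ℕ) (Pik : ℝ) (p a : ℕ → ℝ)
    (hp : ∀ n, p n = (-1 : ℝ) ^ (n + k) * (q ^ (n * k))⁻¹ * q ^ (k * (k + 1) / 2) * a n * Pik)
    (m : ℕ) :
    ∑ j ∈ Finset.range (k + 1), qbinom q k j * q ^ ((k - j) * (k - j - 1) / 2) * p (m + k - j)
      = (-1 : ℝ) ^ m * (q ^ (k * m))⁻¹ * Pik * TT q k a m := by
  rw [TT_eq q hq0, Finset.mul_sum]
  refine Finset.sum_congr rfl ?_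
  intro j hj
  obtain ⟨i, rfl⟩ : ∃ i, k = i + j := ⟨k - j, by simp at hj; omega⟩
  rw [hp, Nat.add_sub_cancel, show m + (i + j) - j = m + i by omega]
  have h := congrArg (fun e => q ^ e) (exp_id i j)
  simp only [pow_add q (i * (i - 1) / 2), pow_add q (i * (i + j))] at h
  have hs : (-1 : ℝ) ^ (m + i + (i + j)) = (-1) ^ m * (-1) ^ j := by
    rw [show m + i + (i + j) = m + j + 2 * i by ring, pow_add, pow_mul, pow_add]; simp
  have hx : q ^ ((m + i) * (i + j)) = q ^ ((i + j) * m) * q ^ (i * (i + j)) := by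
    rw [← pow_add]; congr 1; ring
  have n1 := (pow_pos hq0 ((i + j) * m)).ne'
  have n2 := (pow_pos hq0 (i * (i + j))).ne'
  rw [hs, hx]
  generalize q ^ (i * (i + j)) = A at *
  generalize q ^ ((i + j) * m) = B at *
  generalize q ^ (i * (i - 1) / 2) = X at *
  generalize q ^ ((i + j) * (i + j + 1) / 2) = Y at *
  generalize q ^ (j * (j + 1) / 2) = Z at *
  have hZ : Z = X * Y * A⁻¹ := by rw [h]; field_simp
  rw [hZ, mul_inv]
  ring

/-- for `k ≥ 1`, `0 < q ≤ 1`, `Π_k > 0`, a sequence `(p_n)` satisfies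
`∑_{j=0}^k [k choose j]_q q^{(k-j)(k-j-1)/2} p_{n-j} = (-1)^{n-k} q^{-k(n-k)} Π_k` for all
`n ≥ k` iff there exist constants `C_1, …, C_k` with
`p_n = (-1)^{n-k} q^{-nk} q^{k(k+1)/2} ([n choose k]_q + ∑_{r=1}^k C_r q^{nr} [n choose k-r]_q) Π_k`
for all `n ≥ 0`.  (Since `n - k` may be negative, the sign `(-1)^{n-k}` is written as
`(-1)^{n+k}`, which agrees with it whenever both make sense.) -/
theorem stmt5 (q : ℝ) (hq0 : 0 < q) (hq1 : q ≤ 1) (k : ℕ) (hk : 1 ≤ k)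
    (Pik : ℝ) (hPik : 0 < Pik) (p : ℕ → ℝ) :
    (∀ n : ℕ, k ≤ n →
        ∑ j ∈ Finset.range (k + 1),
            qbinom q k j * q ^ ((k - j) * (k - j - 1) / 2) * p (n - j)
          = (-1 : ℝ) ^ (n - k) * (q ^ (k * (n - k)))⁻¹ * Pik)
      ↔ ∃ C : ℕ → ℝ, ∀ n : ℕ,
          p n = (-1 : ℝ) ^ (n + k) * (q ^ (n * k))⁻¹ * q ^ (k * (k + 1) / 2) *
            (qbinom q n k +
              ∑ r ∈ Finset.Icc 1 k, C r * q ^ (n * r) * qbinom q n (k - r)) * Pik := by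
  constructor
  · intro h
    have hW : ∀ n, (-1 : ℝ) ^ (n + k) * (q ^ (n * k))⁻¹ * q ^ (k * (k + 1) / 2) ≠ 0 := fun n =>
      mul_ne_zero (mul_ne_zero (pow_ne_zero _ (by norm_num)) (inv_ne_zero (pow_pos hq0 _).ne'))
        (pow_pos hq0 _).ne'
    obtain ⟨a, ha⟩ : ∃ a : ℕ → ℝ, ∀ n, p n =
        (-1 : ℝ) ^ (n + k) * (q ^ (n * k))⁻¹ * q ^ (k * (k + 1) / 2) * a n * Pik := by
      refine ⟨fun n => p n / ((-1 : ℝ) ^ (n + k) * (q ^ (n * k))⁻¹ * q ^ (k * (k + 1) / 2)) / Pik,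
        fun n => ?_⟩
      have := hW n
      rw [mul_assoc, div_mul_cancel₀ _ hPik.ne', mul_div_cancel₀ _ this]
    have hT : ∀ m, TT q k a m = 1 := by
      intro m
      have h1 := key q hq0 k Pik p a ha m
      rw [h (m + k) (by omega), Nat.add_sub_cancel] at h1
      have h2 : (-1 : ℝ) ^ m * (q ^ (k * m))⁻¹ * Pik ≠ 0 :=
        mul_ne_zero (mul_ne_zero (pow_ne_zero _ (by norm_num)) (inv_ne_zero (pow_pos hq0 _).ne'))
          hPik.ne'
      exact mul_left_cancel₀ h2 (by rw [← h1, mul_one])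
    obtain ⟨D, hD⟩ := exists_coeff q hq0 k a k
    refine ⟨fun r => D (k - r), fun n => ?_⟩
    rw [ha n]
    congr 2
    refine TT_unique q hq0 k a (fun n => qbinom q n k +
      ∑ r ∈ Finset.Icc 1 k, D (k - r) * q ^ (n * r) * qbinom q n (k - r)) ?_ ?_ n
    · intro m
      rw [hT, TT_sol q hq0 k (fun r => D (k - r)) m]
    · intro n hn
      beta_reduce
      rw [← hD n hn, qbinom_gt' q n k hn, zero_add]
      refine Finset.sum_nbij' (fun m => k - m) (fun r => k - r) ?_ ?_ ?_ ?_ ?_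
      · intro m hm
        simp at hm ⊢
        omega
      · intro m hm
        simp at hm ⊢
        omega
      · intro m hm
        simp at hm ⊢
        omega
      · intro m hm
        simp at hm ⊢
        omega
      · intro m hm
        simp at hm
        rw [show k - (k - m) = m by omega]
  · rintro ⟨C, hC⟩ n hn
    obtain ⟨m, rfl⟩ : ∃ m, n = m + k := ⟨n - k, by omega⟩
    rw [key q hq0 k Pik p _ hC m, TT_sol q hq0, Nat.add_sub_cancel, mul_one]
end

section
/- Let 0 < q < 1, η > 0, θ ≥ 0, τ ≥ 0 and fix s > 0 and an integer k ≥ 0. Then there exists a constant c ≥ 0 (depending on k, s and the parameters, but not on n) such that |p_n(x_k(s); s)| ≤ c q^{−kn} for all n ≥ 0. -/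
/-- `a_n = η⁻¹ + θ[n]_q + [n]_q² ητ`. -/
noncomputable def aCoef (η θ τ q : ℝ) (n : ℕ) : ℝ :=
  η⁻¹ + θ * qnum q n + (qnum q n) ^ 2 * η * τ

/-- `b_n(t) = (tη + θ + ([n]_q + [n-1]_q)ητ)[n]_q`. -/
noncomputable def bCoef (η θ τ q t : ℝ) (n : ℕ) : ℝ :=
  (t * η + θ + (qnum q n + qnum q (n - 1)) * η * τ) * qnum q n

/-- `c_n(t) = η(t + τ[n-1]_q)[n]_q`. -/
noncomputable def cCoef (η τ q t : ℝ) (n : ℕ) : ℝ :=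
  η * (t + τ * qnum q (n - 1)) * qnum q n

/-- `A_n(x,s) = a_n + q^n x - sη q^n [n]_q`. -/
noncomputable def ACoef (η θ τ q x s : ℝ) (n : ℕ) : ℝ :=
  aCoef η θ τ q n + q ^ n * x - s * η * q ^ n * qnum q n

/-- `x_k(s) = ((sη q^k - θ)[k]_q - η⁻¹ - ητ[k]_q²)/q^k`, the zero of `x ↦ A_k(x,s)`. -/
noncomputable def xPt (η θ τ q s : ℝ) (k : ℕ) : ℝ :=
  ((s * η * q ^ k - θ) * qnum q k - η⁻¹ - η * τ * (qnum q k) ^ 2) / q ^ k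

/-- `(y;q)_j`. -/
noncomputable def poch (q y : ℝ) (j : ℕ) : ℝ := ∏ i ∈ Finset.range j, (1 - y * q ^ i)

lemma poch_zero (q y : ℝ) : poch q y 0 = 1 := by simp [poch]

lemma poch_succ (q y : ℝ) (j : ℕ) : poch q y (j+1) = poch q y j * (1 - y * q ^ j) := by
  simp [poch, Finset.prod_range_succ]

lemma poch_succ_left (q y : ℝ) (j : ℕ) : poch q y (j+1) = (1 - y) * poch q (y * q) j := by
  simp only [poch, Finset.prod_range_succ']
  rw [mul_comm]
  congr 1
  · simp
  · apply Finset.prod_congr rfl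
    intro i _
    ring

lemma qnum_eq (q : ℝ) (hq : q < 1) (n : ℕ) : qnum q n = (1 - q ^ n) / (1 - q) := by
  have h : (1 - q) ≠ 0 := by linarith
  rw [qnum, eq_div_iff h, geom_sum_mul_neg]

/-- weights -/
noncomputable def wt (q : ℝ) (n j : ℕ) : ℝ := poch q (q ^ n)⁻¹ j * q ^ j / poch q q j

/-- products -/
noncomputable def prA (η θ τ q x s : ℝ) (j : ℕ) : ℝ :=
  ∏ i ∈ Finset.range j, (ACoef η θ τ q x s i / aCoef η θ τ q i)

lemma poch_q_pos (q : ℝ) (hq0 : 0 < q) (hq1 : q < 1) (j : ℕ) : 0 < poch q q j := by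
  apply Finset.prod_pos
  intro i _
  have : q ^ (i+1) < 1 := pow_lt_one₀ hq0.le hq1 (by omega)
  rw [pow_succ] at this
  linarith

lemma aCoef_pos (η θ τ q : ℝ) (hq0 : 0 < q) (hη : 0 < η) (hθ : 0 ≤ θ) (hτ : 0 ≤ τ) (n : ℕ) :
    0 < aCoef η θ τ q n := by
  have : 0 ≤ qnum q n := Finset.sum_nonneg (fun i _ => by positivity)
  unfold aCoef
  positivity

lemma prev_shift (q : ℝ) (hq0 : 0 < q) (hq1 : q < 1) (n j : ℕ) :
    qnum q n * poch q (q ^ (n-1))⁻¹ j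
      = - q ^ n * (poch q (q ^ n)⁻¹ j * (1 - (q ^ n)⁻¹ * q ^ j)) / (1 - q) := by
  have h : (1 - q) ≠ 0 := by linarith
  rw [← poch_succ, poch_succ_left, qnum_eq q hq1]
  rcases n with _ | n
  · simp
  · have e : (q ^ (n+1))⁻¹ * q = (q ^ n)⁻¹ := by
      rw [pow_succ]; field_simp
    rw [e, Nat.add_sub_cancel]
    field_simp
    ring

lemma next_shift (q : ℝ) (hq0 : 0 < q) (n j : ℕ) :
    poch q (q ^ (n+1))⁻¹ (j+1) = (1 - (q ^ n)⁻¹ / q) * poch q (q ^ n)⁻¹ j := by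
  have e : (q ^ (n+1))⁻¹ * q = (q ^ n)⁻¹ := by
    rw [pow_succ]; field_simp
  have e2 : (q ^ (n+1))⁻¹ = (q ^ n)⁻¹ / q := by
    rw [pow_succ]; field_simp
  rw [poch_succ_left, e, e2]

lemma qnum_mul_pred (q : ℝ) (hq0 : 0 < q) (hq1 : q < 1) (n : ℕ) :
    qnum q (n-1) * qnum q n = (qnum q n - 1) / q * qnum q n := by
  rcases n with _ | n
  · simp [qnum]
  · have h : (1 - q) ≠ 0 := by linarith
    rw [Nat.add_sub_cancel, qnum_eq q hq1, qnum_eq q hq1]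
    congr 1
    field_simp
    ring

lemma coef_id (η θ τ q s : ℝ) (hq0 : 0 < q) (hq1 : q < 1) (n m : ℕ) :
    wt q n (m+1) * (s * η * qnum q (m+1) - aCoef η θ τ q (m+1) / q ^ (m+1))
      + wt q n m * aCoef η θ τ q m / q ^ m
    = - aCoef η θ τ q n * wt q (n+1) (m+1) + bCoef η θ τ q s n * wt q n (m+1)
      - cCoef η τ q s n * wt q (n-1) (m+1) := by
  have h : (1 - q) ≠ 0 := by linarith
  have hd := (poch_q_pos q hq0 hq1 m).ne'
  have hm : 1 - q * q ^ m ≠ 0 := by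
    have : q ^ (m+1) < 1 := pow_lt_one₀ hq0.le hq1 (by omega)
    rw [pow_succ] at this
    linarith
  have hb : bCoef η θ τ q s n = (s * η + θ + (qnum q n + (qnum q n - 1) / q) * η * τ) * qnum q n := by
    unfold bCoef
    linear_combination (η * τ) * qnum_mul_pred q hq0 hq1 n
  have hc : cCoef η τ q s n = η * (s + τ * ((qnum q n - 1) / q)) * qnum q n := by
    unfold cCoef
    linear_combination (η * τ) * qnum_mul_pred q hq0 hq1 n
  have hcw : cCoef η τ q s n * wt q (n-1) (m+1) = η * (s + τ * ((qnum q n - 1) / q)) *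
      (- q ^ n * (poch q (q ^ n)⁻¹ (m+1) * (1 - (q ^ n)⁻¹ * q ^ (m+1))) / (1 - q))
        * q ^ (m+1) / poch q q (m+1) := by
    rw [hc, ← prev_shift q hq0 hq1]
    unfold wt
    ring
  rw [hcw, hb]
  unfold wt aCoef
  rw [next_shift q hq0]
  simp only [poch_succ, qnum_eq q hq1]
  clear hcw hb hc
  have hN : q ^ n ≠ 0 := by positivity
  have hJ : q ^ m ≠ 0 := by positivity
  rw [pow_succ q m]
  generalize poch q (q ^ n)⁻¹ m = f
  generalize poch q q m = d at *
  generalize q ^ n = N at *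
  generalize q ^ m = J at *
  generalize η⁻¹ = e
  have hm2 : 1 - J * q ≠ 0 := by rwa [mul_comm]
  field_simp
  ring

lemma coef_id0 (η θ τ q s : ℝ) (n : ℕ) :
    - η⁻¹ = - aCoef η θ τ q n + bCoef η θ τ q s n - cCoef η τ q s n := by
  unfold aCoef bCoef cCoef
  ring

lemma tele (η θ τ q s x : ℝ) (hq0 : 0 < q) (hq1 : q < 1) (hη : 0 < η) (hθ : 0 ≤ θ) (hτ : 0 ≤ τ)
    (n m : ℕ) :
    ∑ j ∈ Finset.range (m+1), (x * wt q n j - (- aCoef η θ τ q n * wt q (n+1) j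
      + bCoef η θ τ q s n * wt q n j - cCoef η τ q s n * wt q (n-1) j)) * prA η θ τ q x s j
    = wt q n m * aCoef η θ τ q m / q ^ m * prA η θ τ q x s (m+1) := by
  have key : ∀ j, aCoef η θ τ q j / q ^ j * prA η θ τ q x s (j+1)
      = (aCoef η θ τ q j / q ^ j + x - s * η * qnum q j) * prA η θ τ q x s j := by
    intro j
    have ha := (aCoef_pos η θ τ q hq0 hη hθ hτ j).ne'
    have hJ : q ^ j ≠ 0 := by positivity
    rw [prA, Finset.prod_range_succ, ← prA, ACoef]
    field_simp
  induction m with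
  | zero =>
    have := coef_id0 η θ τ q s n
    have k0 := key 0
    simp only [zero_add, Finset.sum_range_one]
    rw [mul_div_assoc, mul_assoc, k0]
    have w0 : ∀ n, wt q n 0 = 1 := by intro n; simp [wt, poch]
    have a0 : aCoef η θ τ q 0 = η⁻¹ := by simp [aCoef, qnum]
    have q0 : qnum q 0 = 0 := by simp [qnum]
    simp only [w0, a0, q0, pow_zero]
    linear_combination prA η θ τ q x s 0 * this
  | succ m ih =>
    rw [Finset.sum_range_succ, ih, mul_div_assoc (wt q n (m+1)), mul_assoc (wt q n (m+1)), key (m+1)]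
    linear_combination prA η θ τ q x s (m+1) * coef_id η θ τ q s hq0 hq1 n m

lemma wt_bound (q : ℝ) (hq0 : 0 < q) (hq1 : q < 1) (k n j : ℕ) (hj : j ≤ k) :
    |wt q n j| ≤ (q ^ j / poch q q j) * (q ^ (k * n))⁻¹ := by
  have hd := poch_q_pos q hq0 hq1 j
  have hN : q ^ n ≤ 1 := pow_le_one₀ hq0.le hq1.le
  have hNp : 0 < q ^ n := by positivity
  have h1 : 1 ≤ (q ^ n)⁻¹ := (one_le_inv₀ hNp).2 hN
  have hp : |poch q (q ^ n)⁻¹ j| ≤ (q ^ (k * n))⁻¹ := by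
    calc |poch q (q ^ n)⁻¹ j| = ∏ i ∈ Finset.range j, |1 - (q ^ n)⁻¹ * q ^ i| := by
          rw [poch, Finset.abs_prod]
      _ ≤ ∏ i ∈ Finset.range j, (q ^ n)⁻¹ := by
          apply Finset.prod_le_prod
          · intro i _; positivity
          · intro i _
            have h2 : q ^ i ≤ 1 := pow_le_one₀ hq0.le hq1.le
            have h3 : 0 < q ^ i := by positivity
            rw [abs_le]
            constructor <;> nlinarith [mul_pos (inv_pos.2 hNp) h3]
      _ = ((q ^ n)⁻¹) ^ j := by simp
      _ ≤ ((q ^ n)⁻¹) ^ k := pow_le_pow_right₀ h1 hj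
      _ = (q ^ (k * n))⁻¹ := by rw [inv_pow, ← pow_mul, mul_comm]
  have e : wt q n j = (q ^ j / poch q q j) * poch q (q ^ n)⁻¹ j := by
    unfold wt; ring
  have hpos : 0 < q ^ j / poch q q j := by positivity
  rw [e, abs_mul, abs_of_pos hpos]
  exact mul_le_mul_of_nonneg_left hp hpos.le

/-- for `0 < q < 1`, `η > 0`, `θ ≥ 0`, `τ ≥ 0`, `s > 0` and `k ≥ 0`, there is a
constant `c ≥ 0` (independent of `n`) with `|p_n(x_k(s);s)| ≤ c q^{-kn}` for all `n ≥ 0`. -/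
theorem stmt9 (η θ τ q s : ℝ)
    (hq0 : 0 < q) (hq1 : q < 1) (hη : 0 < η) (hθ : 0 ≤ θ) (hτ : 0 ≤ τ) (hs : 0 < s)
    (k : ℕ)
    (p : ℕ → ℝ → ℝ)
    (hp0 : ∀ y : ℝ, p 0 y = 1)
    (hprec : ∀ (n : ℕ) (y : ℝ), y * p n y =
      aCoef η θ τ q n * p (n + 1) y + bCoef η θ τ q s n * p n y
        + cCoef η τ q s n * p (n - 1) y) :
    ∃ c : ℝ, 0 ≤ c ∧ ∀ n : ℕ, |p n (xPt η θ τ q s k)| ≤ c * (q ^ (k * n))⁻¹ := by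
  set x := xPt η θ τ q s k with hx
  have hAk : ACoef η θ τ q x s k = 0 := by
    have hJ : q ^ k ≠ 0 := by positivity
    rw [hx, ACoef, aCoef, xPt]
    field_simp
    ring
  have hpr : prA η θ τ q x s (k+1) = 0 := by
    rw [prA, Finset.prod_range_succ, hAk]
    simp
  set Q : ℕ → ℝ := fun n => ∑ j ∈ Finset.range (k+1), wt q n j * prA η θ τ q x s j with hQ
  have hrec : ∀ n, x * Q n = - aCoef η θ τ q n * Q (n+1) + bCoef η θ τ q s n * Q n
      - cCoef η τ q s n * Q (n-1) := by
    intro n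
    have h := tele η θ τ q s x hq0 hq1 hη hθ hτ n k
    rw [hpr, mul_zero] at h
    rw [← sub_eq_zero, ← h]
    simp only [hQ, Finset.mul_sum]
    rw [← Finset.sum_add_distrib, ← Finset.sum_sub_distrib, ← Finset.sum_sub_distrib]
    apply Finset.sum_congr rfl
    intro j _
    ring
  have hQ0 : Q 0 = 1 := by
    simp only [hQ]
    rw [Finset.sum_range_succ']
    have : ∀ j, wt q 0 (j+1) = 0 := by
      intro j
      simp [wt, poch_succ_left]
    simp only [this, zero_mul, Finset.sum_const_zero, zero_add]
    simp [wt, poch, prA]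
  have main : ∀ n, p n x = (-1) ^ n * Q n ∧ p (n+1) x = (-1) ^ (n+1) * Q (n+1) := by
    intro n
    induction n with
    | zero =>
      have ha := (aCoef_pos η θ τ q hq0 hη hθ hτ 0).ne'
      have h0 : p 0 x = (-1) ^ 0 * Q 0 := by rw [hp0, hQ0]; simp
      refine ⟨h0, ?_⟩
      have h1 := hprec 0 x
      have h2 := hrec 0
      have hb : bCoef η θ τ q s 0 = 0 := by simp [bCoef, qnum]
      have hc : cCoef η τ q s 0 = 0 := by simp [cCoef, qnum]
      rw [hb, hc, hp0] at h1
      rw [hb, hc, hQ0] at h2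
      apply mul_left_cancel₀ ha
      linear_combination h2 - h1
    | succ n ih =>
      refine ⟨ih.2, ?_⟩
      have ha := (aCoef_pos η θ τ q hq0 hη hθ hτ (n+1)).ne'
      have h1 := hprec (n+1) x
      have h2 := hrec (n+1)
      rw [Nat.add_sub_cancel, ih.1, ih.2] at h1
      rw [Nat.add_sub_cancel] at h2
      apply mul_left_cancel₀ ha
      linear_combination (-1) ^ (n+1) * h2 - h1
  refine ⟨∑ j ∈ Finset.range (k+1), (q ^ j / poch q q j) * |prA η θ τ q x s j|, ?_, ?_⟩
  · apply Finset.sum_nonneg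
    intro j _
    have hd := poch_q_pos q hq0 hq1 j
    positivity
  · intro n
    rw [(main n).1, abs_mul, abs_pow, abs_neg, abs_one, one_pow, one_mul]
    refine (Finset.abs_sum_le_sum_abs _ _).trans ?_
    rw [Finset.sum_mul]
    apply Finset.sum_le_sum
    intro j hj
    rw [abs_mul, mul_right_comm]
    exact mul_le_mul_of_nonneg_right
      (wt_bound q hq0 hq1 k n j (by rw [Finset.mem_range] at hj; omega)) (abs_nonneg _)
end

section
/- Let 0 ≤ q ≤ 1, η > 0, θ ≥ 0, τ ≥ 0 and fix t > 0. If μ₁ and μ₂ are two probability measures on ℝ, each with finite moments of all orders, such that for each i ∈ {1,2} one has ∫ p_m(y;t) p_n(y;t) μ_i(dy) = 0 whenever m ≠ n, then μ₁ = μ₂. In other words, the orthogonality measure of the polynomials {p_n(·;t)} is determined uniquely by its moments. -/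
open MeasureTheory


lemma core_div (h : ℕ → ℝ) (hpos : ∀ n, 0 < h n) (h1 : Summable fun n => 1 / h n)
    (h2 : Summable fun n : ℕ => h n / ((n : ℝ) + 1) ^ 2) : False := by
  have h3 := h1.add h2
  have h4 : Summable fun n : ℕ => 1 / ((n : ℝ) + 1) := by
    refine Summable.of_nonneg_of_le (fun n => by positivity) (fun n => ?_) h3
    have hx := hpos n
    have hN : (0 : ℝ) < (n : ℝ) + 1 := by positivity
    have : 1 / h n + h n / ((n : ℝ) + 1) ^ 2 - 1 / ((n : ℝ) + 1)
        = ((h n - (n + 1)) ^ 2 + h n * (n + 1)) / (h n * ((n : ℝ) + 1) ^ 2) := by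
      field_simp
      ring
    have h5 : 0 ≤ ((h n - (n + 1)) ^ 2 + h n * (n + 1)) / (h n * ((n : ℝ) + 1) ^ 2) := by
      positivity
    linarith
  have h5 : Summable fun n : ℕ => 1 / ((n : ℝ)) := by
    rw [← summable_nat_add_iff 1]
    simpa using h4
  exact Real.not_summable_one_div_natCast h5

lemma div_case1 (a c h s : ℕ → ℝ) (ha : ∀ n, 0 < a n) (hc : ∀ n, 0 < c (n + 1))
    (hh : ∀ n, 0 < h n) (hrel : ∀ n, h (n + 1) * a n = h n * c (n + 1))
    (hs0 : s 0 = 0) (hs : ∀ n, s (n + 1) = s n + h n / a n)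
    (C : ℝ) (hC : 0 < C) (haC : ∀ n : ℕ, a n ≤ C * (n + 1)) (hcC : ∀ n : ℕ, c (n + 1) ≤ C * (n + 1))
    (h1 : Summable fun n => 1 / h n) (h2 : Summable fun n => s n ^ 2 / h n) : False := by
  have hsn : ∀ n, 0 ≤ s n := by
    intro n
    induction n with
    | zero => simp [hs0]
    | succ n ih => rw [hs]; have := hh n; have := ha n; positivity
  refine core_div h hh h1 ?_
  have h3 := ((summable_nat_add_iff 1).2 h2).mul_left (C ^ 2)
  refine Summable.of_nonneg_of_le (fun n => by have := hh n; positivity) (fun n => ?_) h3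
  have e1 := hh n
  have e2 := hh (n + 1)
  have e3 := ha n
  have e4 := hc n
  have e5 : h n / a n ≤ s (n + 1) := by rw [hs]; linarith [hsn n]
  have hN : (0 : ℝ) < (n : ℝ) + 1 := by positivity
  have e6 : h (n + 1) = h n * c (n + 1) / a n := by rw [eq_div_iff e3.ne']; exact hrel n
  calc h n / ((n : ℝ) + 1) ^ 2 = C ^ 2 * (h n / ((C * (n + 1)) * (C * (n + 1)))) := by field_simp
    _ ≤ C ^ 2 * (h n / (a n * c (n + 1))) := by
        gcongr
        · exact haC n
        · exact hcC n
    _ = C ^ 2 * ((h n / a n) ^ 2 / h (n + 1)) := by rw [e6]; field_simp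
    _ ≤ C ^ 2 * (s (n + 1) ^ 2 / h (n + 1)) := by gcongr

lemma div_case2 (a c h s : ℕ → ℝ) (ha : ∀ n, 0 < a n) (hc : ∀ n, 0 < c (n + 1))
    (hh : ∀ n, 0 < h n) (hrel : ∀ n, h (n + 1) * a n = h n * c (n + 1))
    (hs0 : s 0 = 0) (hs : ∀ n, s (n + 1) = s n + h n / a n)
    (C K : ℝ) (hC : 0 < C) (hK : 0 < K) (haC : ∀ n : ℕ, a n ≤ C * (n + 1) ^ 2)
    (hcK : ∀ n : ℕ, c (n + 1) ≤ a n * (1 + K / (n + 1)))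
    (h1 : Summable fun n => 1 / h n) (h2 : Summable fun n => s n ^ 2 / h n) : False := by
  obtain ⟨κ, hκ, hκ1, hκ2⟩ : ∃ κ : ℝ, 0 < κ ∧ κ * K ≤ 1 / C ∧ κ ≤ 1 / c 1 := by
    refine ⟨min (1 / (C * K)) (1 / c 1), ?_, ?_, min_le_right _ _⟩
    · have := hc 0
      positivity
    · calc _ ≤ 1 / (C * K) * K := by gcongr; exact min_le_left _ _
        _ = 1 / C := by field_simp
  have hrat : ∀ n : ℕ, h (n + 1) ≤ h n * (1 + K / (n + 1)) := by
    intro n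
    have := hcK n
    have e := ha n
    have e1 := hh n
    refine le_of_mul_le_mul_right ?_ e
    rw [hrel]
    calc h n * c (n + 1) ≤ h n * (a n * (1 + K / (n + 1))) := by gcongr
      _ = _ := by ring
  have key : ∀ n : ℕ, κ * h (n + 1) / (n + 1) ≤ s (n + 1) := by
    intro n
    induction n with
    | zero =>
      rw [hs, hs0]
      have e3 := ha 0
      have e1 := hh 0
      have e4 := hc 0
      have e6 : h (0 + 1) = h 0 * c (0 + 1) / a 0 := by rw [eq_div_iff e3.ne']; exact hrel 0
      rw [e6]
      have : κ * c 1 ≤ 1 := by rwa [le_div_iff₀ e4] at hκ2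
      calc _ = (κ * c 1) * (h 0 / a 0) := by simp; ring
        _ ≤ 1 * (h 0 / a 0) := by gcongr
        _ = _ := by ring
    | succ n ih =>
      rw [hs]
      have e1 := hh (n + 1)
      have e3 := ha (n + 1)
      have f1 := hrat (n + 1)
      have f2 := haC (n + 1)
      have f3 : h (n + 1) / (C * (((n + 1 : ℕ) : ℝ) + 1) ^ 2) ≤ h (n + 1) / a (n + 1) := by
        gcongr
      push_cast at f1 f2 f3 ⊢
      have hN : (0 : ℝ) < (n : ℝ) + 1 := by positivity
      generalize (n : ℝ) + 1 = N at *
      have g1 : κ * h (n + 1 + 1) / (N + 1) ≤ κ * (h (n + 1) * (1 + K / (N + 1))) / (N + 1) := by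
        gcongr
      have g2 : κ * (h (n + 1) * (1 + K / (N + 1))) / (N + 1)
          = κ * h (n + 1) / (N + 1) + (κ * K) * (h (n + 1) / (N + 1) ^ 2) := by
        field_simp
      have g3 : (κ * K) * (h (n + 1) / (N + 1) ^ 2) ≤ (1 / C) * (h (n + 1) / (N + 1) ^ 2) := by
        gcongr
      have g4 : (1 / C) * (h (n + 1) / (N + 1) ^ 2) = h (n + 1) / (C * (N + 1) ^ 2) := by
        field_simp
      have g5 : κ * h (n + 1) / (N + 1) ≤ κ * h (n + 1) / N := by
        gcongr
        linarith
      linarith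
  refine core_div h hh h1 ?_
  rw [← summable_nat_add_iff 1]
  have h3 := ((summable_nat_add_iff 1).2 h2).mul_left (1 / κ ^ 2)
  refine Summable.of_nonneg_of_le (fun n => by have := hh (n + 1); positivity) (fun n => ?_) h3
  have e1 := hh (n + 1)
  push_cast
  have hN : (0 : ℝ) < (n : ℝ) + 1 := by positivity
  calc h (n + 1) / ((n : ℝ) + 1 + 1) ^ 2 ≤ h (n + 1) / ((n : ℝ) + 1) ^ 2 := by
        gcongr
        linarith
    _ = 1 / κ ^ 2 * ((κ * h (n + 1) / (n + 1)) ^ 2 / h (n + 1)) := by field_simp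
    _ ≤ _ := by
        gcongr
        exact key n

/-- Invariability of the limit-circle case. -/
lemma limit_circle (a b c h : ℕ → ℝ) (ha : ∀ n, 0 < a n)
    (hh : ∀ n, 0 < h n) (hrel : ∀ n, h (n + 1) * a n = h n * c (n + 1))
    (z x : ℂ) (f g u : ℕ → ℂ)
    (hf : ∀ n, z * f (n + 1) = a (n + 1) * f (n + 2) + b (n + 1) * f (n + 1) + c (n + 1) * f n)
    (hg : ∀ n, z * g (n + 1) = a (n + 1) * g (n + 2) + b (n + 1) * g (n + 1) + c (n + 1) * g n)
    (hu : ∀ n, x * u (n + 1) = a (n + 1) * u (n + 2) + b (n + 1) * u (n + 1) + c (n + 1) * u n)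
    (hW : f 0 * g 1 - f 1 * g 0 ≠ 0)
    (hfs : Summable fun n => ‖f n‖ ^ 2 / h n) (hgs : Summable fun n => ‖g n‖ ^ 2 / h n) :
    Summable fun n => ‖u n‖ ^ 2 / h n := by
  set W : (ℕ → ℂ) → (ℕ → ℂ) → ℕ → ℂ := fun v w n =>
    (a n / h n : ℝ) * (v n * w (n + 1) - v (n + 1) * w n) with hWdef
  have hstep : ∀ (x z : ℂ) (v w : ℕ → ℂ)
      (_ : ∀ n, x * v (n + 1) = a (n + 1) * v (n + 2) + b (n + 1) * v (n + 1) + c (n + 1) * v n)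
      (_ : ∀ n, z * w (n + 1) = a (n + 1) * w (n + 2) + b (n + 1) * w (n + 1) + c (n + 1) * w n)
      (n : ℕ), W v w (n + 1) = W v w n + (z - x) * (v (n + 1) * w (n + 1)) / (h (n + 1) : ℝ) := by
    intro x z v w hv hw n
    have e1 : (h n : ℂ) ≠ 0 := by exact_mod_cast (hh n).ne'
    have e2 : (h (n + 1) : ℂ) ≠ 0 := by exact_mod_cast (hh (n + 1)).ne'
    have e3 : (h (n + 1) : ℂ) * a n = h n * c (n + 1) := by exact_mod_cast hrel n
    have v1 := hv n
    have w1 := hw n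
    simp only [hWdef]
    push_cast
    have e4 : (a n : ℂ) / h n = c (n + 1) / h (n + 1) := by
      field_simp
      linear_combination e3
    rw [e4]
    field_simp
    linear_combination w (n + 1) * v1 - v (n + 1) * w1
  have hWc : ∀ n, W f g n = W f g 0 := by
    intro n
    induction n with
    | zero => rfl
    | succ n ih => rw [hstep z z f g hf hg, ih]; simp
  have hW0 : W f g 0 ≠ 0 := by
    simp only [hWdef]
    refine mul_ne_zero ?_ hW
    have := ha 0
    have := hh 0
    exact_mod_cast (by positivity : 0 < a 0 / h 0).ne'
  have hid : ∀ n, u (n + 1) * W f g 0 = f (n + 1) * W u g n - g (n + 1) * W u f n := by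
    intro n
    rw [← hWc n]
    simp only [hWdef]
    ring
  set w := ‖W f g 0‖ with hw
  have hwpos : 0 < w := norm_pos_iff.2 hW0
  set T : ℕ → ℝ := fun n => ‖W u g n‖ + ‖W u f n‖ with hT
  have hTn : ∀ n, 0 ≤ T n := fun n => by positivity
  have hub : ∀ n, ‖u (n + 1)‖ ≤ (‖f (n + 1)‖ + ‖g (n + 1)‖) * T n / w := by
    intro n
    rw [le_div_iff₀ hwpos, hw, ← norm_mul, hid]
    refine (norm_sub_le _ _).trans ?_
    rw [norm_mul (f (n + 1)), norm_mul (g (n + 1))]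
    simp only [hT]
    clear_value W
    have := norm_nonneg (f (n + 1))
    have := norm_nonneg (g (n + 1))
    have := norm_nonneg (W u g n)
    have := norm_nonneg (W u f n)
    nlinarith [mul_nonneg (norm_nonneg (f (n + 1))) (norm_nonneg (W u f n)),
      mul_nonneg (norm_nonneg (g (n + 1))) (norm_nonneg (W u g n))]
  set β : ℕ → ℝ := fun n => (‖f n‖ + ‖g n‖) ^ 2 / h n with hβ
  have hβn : ∀ n, 0 ≤ β n := fun n => by have := hh n; positivity
  have hβs : Summable β := by
    refine Summable.of_nonneg_of_le hβn (fun n => ?_) ((hfs.add hgs).mul_left 2)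
    have := hh n
    simp only [hβ]
    rw [← add_div, ← mul_div_assoc]
    gcongr
    nlinarith [sq_nonneg (‖f n‖ - ‖g n‖)]
  set C := ‖z - x‖ / w with hC
  have hC0 : 0 ≤ C := by positivity
  have hTstep : ∀ n, T (n + 1) ≤ T n * (1 + C * β (n + 1)) := by
    intro n
    have e := hh (n + 1)
    have b1 : ∀ v : ℕ → ℂ, ‖(z - x) * (u (n + 1) * v (n + 1)) / (h (n + 1) : ℝ)‖
        = ‖z - x‖ * (‖u (n + 1)‖ * ‖v (n + 1)‖) / h (n + 1) := by
      intro v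
      rw [norm_div, norm_mul, norm_mul, Complex.norm_of_nonneg e.le]
    have t1 : ‖W u g (n + 1)‖ ≤ ‖W u g n‖ + ‖z - x‖ * (‖u (n + 1)‖ * ‖g (n + 1)‖) / h (n + 1) := by
      rw [hstep x z u g hu hg, ← b1 g]
      exact norm_add_le _ _
    have t2 : ‖W u f (n + 1)‖ ≤ ‖W u f n‖ + ‖z - x‖ * (‖u (n + 1)‖ * ‖f (n + 1)‖) / h (n + 1) := by
      rw [hstep x z u f hu hf, ← b1 f]
      exact norm_add_le _ _
    calc T (n + 1) ≤ T n + ‖z - x‖ * (‖u (n + 1)‖ * (‖f (n + 1)‖ + ‖g (n + 1)‖)) / h (n + 1) := by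
          simp only [hT]
          refine (add_le_add t1 t2).trans (le_of_eq ?_)
          ring
      _ ≤ T n + ‖z - x‖ * (((‖f (n + 1)‖ + ‖g (n + 1)‖) * T n / w) *
            (‖f (n + 1)‖ + ‖g (n + 1)‖)) / h (n + 1) := by
          gcongr
          exact hub n
      _ = T n * (1 + C * β (n + 1)) := by
          simp only [hC, hβ]
          field_simp
  have hTexp : ∀ n, T n ≤ T 0 * Real.exp (C * ∑ k ∈ Finset.range n, β (k + 1)) := by
    intro n
    induction n with
    | zero => simp
    | succ n ih =>
      refine (hTstep n).trans ?_
      rw [Finset.sum_range_succ, mul_add C, Real.exp_add, ← mul_assoc]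
      have := Real.add_one_le_exp (C * β (n + 1))
      have := hβn (n + 1)
      have := hTn 0
      gcongr
      linarith
  obtain ⟨B, hB⟩ : ∃ B, ∀ n, T n ≤ B := by
    refine ⟨T 0 * Real.exp (C * ∑' k, β (k + 1)), fun n => (hTexp n).trans ?_⟩
    have := hTn 0
    gcongr
    exact ((summable_nat_add_iff 1).2 hβs).sum_le_tsum _ (fun i _ => hβn _)
  rw [← summable_nat_add_iff 1]
  refine Summable.of_nonneg_of_le (fun n => by have := hh (n + 1); positivity) (fun n => ?_)
    (((summable_nat_add_iff 1).2 hβs).mul_left ((B / w) ^ 2))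
  have e := hh (n + 1)
  have hTB := hB n
  have := hTn n
  calc ‖u (n + 1)‖ ^ 2 / h (n + 1)
      ≤ ((‖f (n + 1)‖ + ‖g (n + 1)‖) * B / w) ^ 2 / h (n + 1) := by
        gcongr
        refine (hub n).trans ?_
        gcongr
    _ = _ := by simp only [hβ]; field_simp

/-- Measures are determined by their Poisson integrals. -/
lemma poisson_unique (μ ν : Measure ℝ) [IsProbabilityMeasure μ] [IsProbabilityMeasure ν]
    (H : ∀ x ε : ℝ, 0 < ε → ∫ y, ε / ((y - x) ^ 2 + ε ^ 2) ∂μ = ∫ y, ε / ((y - x) ^ 2 + ε ^ 2) ∂ν) :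
    μ = ν := by
  have hK : Integrable fun u : ℝ => (1 + u ^ 2)⁻¹ := integrable_inv_one_add_sq
  have hsub : ∀ (ε : ℝ), 0 < ε → ∀ (y : ℝ) (F : ℝ → ℝ),
      ∫ x, F x * (ε / ((y - x) ^ 2 + ε ^ 2)) = ∫ u, F (y + ε * u) * (1 + u ^ 2)⁻¹ := by
    intro ε hε y F
    rw [← integral_add_left_eq_self _ y]
    have := Measure.integral_comp_mul_left
      (fun x => F (y + x) * (ε / ((y - (y + x)) ^ 2 + ε ^ 2))) ε
    rw [abs_of_pos (inv_pos.2 hε), smul_eq_mul, eq_inv_mul_iff_mul_eq₀ hε.ne',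
      ← integral_const_mul] at this
    rw [← this]
    congr 1
    ext u
    have : (0 : ℝ) < 1 + u ^ 2 := by positivity
    have h2 : (y - (y + ε * u)) ^ 2 + ε ^ 2 = ε ^ 2 * (1 + u ^ 2) := by ring
    rw [h2]
    field_simp
  have hKx : ∀ (ε : ℝ), 0 < ε → ∀ y : ℝ, Integrable fun x : ℝ => ε / ((y - x) ^ 2 + ε ^ 2) := by
    intro ε hε y
    have h1 := ((hK.comp_mul_left' (inv_pos.2 hε).ne').comp_sub_left y).const_mul ε⁻¹
    refine h1.congr (Filter.Eventually.of_forall fun x => ?_)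
    simp only
    field_simp
    ring
  have swap : ∀ (f : BoundedContinuousFunction ℝ ℝ) (ε : ℝ), 0 < ε →
      ∀ (ρ : Measure ℝ) [IsProbabilityMeasure ρ],
      ∫ y, (∫ u, f (y + ε * u) * (1 + u ^ 2)⁻¹) ∂ρ
        = ∫ x, f x * ∫ y, ε / ((y - x) ^ 2 + ε ^ 2) ∂ρ := by
    intro f ε hε ρ _
    have hcont : Continuous fun q : ℝ × ℝ => f q.2 * (ε / ((q.1 - q.2) ^ 2 + ε ^ 2)) := by
      refine (f.continuous.comp continuous_snd).mul ?_
      refine continuous_const.div (by fun_prop) (fun q => ?_)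
      positivity
    have hint : Integrable (fun q : ℝ × ℝ => f q.2 * (ε / ((q.1 - q.2) ^ 2 + ε ^ 2)))
        (ρ.prod volume) := by
      rw [integrable_prod_iff hcont.aestronglyMeasurable]
      refine ⟨Filter.Eventually.of_forall fun y => ?_, ?_⟩
      · exact (hKx ε hε y).bdd_mul f.continuous.aestronglyMeasurable
          (Filter.Eventually.of_forall fun x => f.norm_coe_le_norm x)
      · refine Integrable.of_bound (C := ‖f‖ * Real.pi)
          (hcont.norm.aestronglyMeasurable.integral_prod_right') ?_
        refine Filter.Eventually.of_forall fun y => ?_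
        have e1 : ∀ x, ‖f x * (ε / ((y - x) ^ 2 + ε ^ 2))‖ = ‖f x‖ * (ε / ((y - x) ^ 2 + ε ^ 2)) := by
          intro x
          rw [norm_mul, Real.norm_of_nonneg (r := ε / _) (by positivity)]
        simp only [e1]
        rw [Real.norm_of_nonneg (integral_nonneg fun x => by positivity)]
        calc ∫ x, ‖f x‖ * (ε / ((y - x) ^ 2 + ε ^ 2))
            ≤ ∫ x, ‖f‖ * (ε / ((y - x) ^ 2 + ε ^ 2)) := by
              refine integral_mono_of_nonneg (Filter.Eventually.of_forall fun x => by positivity)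
                ((hKx ε hε y).const_mul _) (Filter.Eventually.of_forall fun x => ?_)
              have := f.norm_coe_le_norm x
              simp only
              gcongr
          _ = ‖f‖ * Real.pi := by
              rw [hsub ε hε y (fun _ => ‖f‖), integral_const_mul, integral_univ_inv_one_add_sq]
    calc ∫ y, (∫ u, f (y + ε * u) * (1 + u ^ 2)⁻¹) ∂ρ
        = ∫ y, (∫ x, f x * (ε / ((y - x) ^ 2 + ε ^ 2))) ∂ρ := by
          congr 1; ext y; rw [hsub ε hε y f]
      _ = ∫ x, (∫ y, f x * (ε / ((y - x) ^ 2 + ε ^ 2)) ∂ρ) := integral_integral_swap hint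
      _ = _ := by congr 1; ext x; rw [integral_const_mul]
  have lim : ∀ (f : BoundedContinuousFunction ℝ ℝ) (ρ : Measure ℝ) [IsProbabilityMeasure ρ],
      Filter.Tendsto (fun n : ℕ => ∫ y, (∫ u, f (y + (1 / ((n : ℝ) + 1)) * u) * (1 + u ^ 2)⁻¹) ∂ρ)
        Filter.atTop (nhds (∫ y, f y * Real.pi ∂ρ)) := by
    intro f ρ _
    refine tendsto_integral_of_dominated_convergence (fun _ => ‖f‖ * Real.pi) ?_
      (integrable_const _) ?_ ?_
    · intro n
      have hcont : Continuous fun q : ℝ × ℝ =>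
          f (q.1 + (1 / ((n : ℝ) + 1)) * q.2) * (1 + q.2 ^ 2)⁻¹ := by
        refine (f.continuous.comp (by fun_prop)).mul ?_
        refine Continuous.inv₀ (by fun_prop) (fun q => ?_)
        positivity
      exact hcont.aestronglyMeasurable.integral_prod_right' (μ := ρ) (ν := volume)
    · intro n
      refine Filter.Eventually.of_forall fun y => ?_
      rw [← integral_univ_inv_one_add_sq, ← integral_const_mul]
      refine norm_integral_le_of_norm_le (hK.const_mul _) (Filter.Eventually.of_forall fun u => ?_)
      rw [norm_mul, Real.norm_of_nonneg (r := (_)⁻¹) (by positivity)]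
      have := f.norm_coe_le_norm (y + (1 / ((n : ℝ) + 1)) * u)
      gcongr
    · refine Filter.Eventually.of_forall fun y => ?_
      rw [← integral_univ_inv_one_add_sq, ← integral_const_mul]
      refine tendsto_integral_of_dominated_convergence (fun u => ‖f‖ * (1 + u ^ 2)⁻¹) ?_
        (hK.const_mul _) ?_ ?_
      · intro n
        refine Continuous.aestronglyMeasurable ?_
        refine (f.continuous.comp (by fun_prop)).mul ?_
        refine Continuous.inv₀ (by fun_prop) (fun q => ?_)
        positivity
      · intro n
        refine Filter.Eventually.of_forall fun u => ?_
        rw [norm_mul, Real.norm_of_nonneg (r := (_)⁻¹) (by positivity)]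
        have := f.norm_coe_le_norm (y + (1 / ((n : ℝ) + 1)) * u)
        gcongr
      · refine Filter.Eventually.of_forall fun u => ?_
        refine Filter.Tendsto.mul_const _ ?_
        have h0 : Filter.Tendsto (fun n : ℕ => y + (1 / ((n : ℝ) + 1)) * u) Filter.atTop (nhds (y + 0 * u)) :=
          (tendsto_one_div_add_atTop_nhds_zero_nat.mul_const u).const_add y
        rw [zero_mul, add_zero] at h0
        exact (f.continuous.tendsto y).comp h0
  refine ext_of_forall_integral_eq_of_IsFiniteMeasure fun f => ?_
  have h1 := lim f μ
  have h2 := lim f ν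
  have h3 : (fun n : ℕ => ∫ y, (∫ u, f (y + (1 / ((n : ℝ) + 1)) * u) * (1 + u ^ 2)⁻¹) ∂μ)
      = fun n : ℕ => ∫ y, (∫ u, f (y + (1 / ((n : ℝ) + 1)) * u) * (1 + u ^ 2)⁻¹) ∂ν := by
    ext n
    have hε : (0 : ℝ) < 1 / ((n : ℝ) + 1) := by positivity
    rw [swap f _ hε μ, swap f _ hε ν]
    congr 1
    ext x
    rw [H x _ hε]
  rw [h3] at h1
  have h4 := tendsto_nhds_unique h1 h2
  rw [integral_mul_const, integral_mul_const] at h4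
  exact mul_right_cancel₀ Real.pi_ne_zero h4

/-- Bessel's inequality. -/
lemma bessel (μ : Measure ℝ) [IsProbabilityMeasure μ] (p : ℕ → ℝ → ℝ) (h : ℕ → ℝ)
    (hh : ∀ n, 0 < h n) (hpi : ∀ n, Integrable (p n) μ)
    (hint : ∀ m n, Integrable (fun y => p m y * p n y) μ)
    (horth : ∀ m n : ℕ, m ≠ n → ∫ y, p m y * p n y ∂μ = 0)
    (hn : ∀ n, ∫ y, p n y * p n y ∂μ = h n)
    (g : ℝ → ℝ) (hgc : Continuous g) (C : ℝ) (hgb : ∀ y, |g y| ≤ C) :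
    Summable fun n => (∫ y, g y * p n y ∂μ) ^ 2 / h n := by
  have hgp : ∀ n, Integrable (fun y => g y * p n y) μ := fun n =>
    (hpi n).bdd_mul hgc.aestronglyMeasurable (Filter.Eventually.of_forall hgb)
  have hgg : Integrable (fun y => g y * g y) μ := by
    refine Integrable.of_bound (C := C * C) (hgc.mul hgc).aestronglyMeasurable
      (Filter.Eventually.of_forall fun y => ?_)
    have := hgb y
    rw [norm_mul]
    exact mul_le_mul this this (abs_nonneg _) ((abs_nonneg _).trans this)
  set d : ℕ → ℝ := fun n => (∫ y, g y * p n y ∂μ) / h n with hd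
  have key : ∀ N : ℕ, ∃ r : ℝ → ℝ, Integrable (fun y => r y * r y) μ ∧
      (∀ n, Integrable (fun y => r y * p n y) μ) ∧
      (∀ n, N ≤ n → ∫ y, r y * p n y ∂μ = ∫ y, g y * p n y ∂μ) ∧
      ∫ y, r y * r y ∂μ = ∫ y, g y * g y ∂μ -
        ∑ n ∈ Finset.range N, (∫ y, g y * p n y ∂μ) ^ 2 / h n := by
    intro N
    induction N with
    | zero => exact ⟨g, hgg, hgp, fun _ _ => rfl, by simp⟩
    | succ N ih =>
      obtain ⟨r, r1, r2, r3, r4⟩ := ih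
      have e1 : (fun y => (r y - d N * p N y) * (r y - d N * p N y)) =
          fun y => r y * r y - (2 * d N) * (r y * p N y) + d N ^ 2 * (p N y * p N y) := by
        ext y; ring
      have e2 : ∀ n, (fun y => (r y - d N * p N y) * p n y) =
          fun y => r y * p n y - d N * (p N y * p n y) := by
        intro n; ext y; ring
      refine ⟨fun y => r y - d N * p N y, ?_, ?_, ?_, ?_⟩
      · simp only [e1]
        exact (r1.sub ((r2 N).const_mul _)).add ((hint N N).const_mul _)
      · intro n
        simp only [e2]
        exact (r2 n).sub ((hint N n).const_mul _)
      · intro n hNn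
        simp only [e2]
        rw [integral_sub (r2 n) ((hint N n).const_mul _), integral_const_mul,
          horth N n (by omega), r3 n (by omega)]
        simp
      · simp only [e1]
        rw [integral_add (f := fun y => r y * r y - (2 * d N) * (r y * p N y))
          (r1.sub ((r2 N).const_mul _)) ((hint N N).const_mul _),
          integral_sub r1 ((r2 N).const_mul _), integral_const_mul, integral_const_mul,
          hn, r3 N le_rfl, r4, Finset.sum_range_succ]
        have := (hh N).ne'
        simp only [hd]
        field_simp
        ring
  refine summable_of_sum_range_le (c := ∫ y, g y * g y ∂μ)
    (fun n => by have := hh n; positivity) (fun N => ?_)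
  obtain ⟨r, -, -, -, r4⟩ := key N
  have : 0 ≤ ∫ y, r y * r y ∂μ := integral_nonneg fun y => mul_self_nonneg _
  linarith

lemma integral_lin3 {𝕜 : Type*} [RCLike 𝕜] (μ : Measure ℝ) (f g k : ℝ → 𝕜) (α β γ : 𝕜)
    (hf : Integrable f μ) (hg : Integrable g μ) (hk : Integrable k μ) :
    ∫ y, (α * f y + (β * g y + γ * k y)) ∂μ
      = α * ∫ y, f y ∂μ + (β * ∫ y, g y ∂μ + γ * ∫ y, k y ∂μ) := by
  have h1 : ∫ y, (β * g y + γ * k y) ∂μ = β * ∫ y, g y ∂μ + γ * ∫ y, k y ∂μ := by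
    rw [integral_add (hg.const_mul β) (hk.const_mul γ), integral_const_mul, integral_const_mul]
  have h2 : Integrable (fun y => β * g y + γ * k y) μ := (hg.const_mul β).add (hk.const_mul γ)
  rw [integral_add (hf.const_mul α) h2, h1, integral_const_mul]

/-- Polynomials are integrable. -/
lemma poly_integrable (μ : Measure ℝ) (hmom : ∀ n : ℕ, Integrable (fun y : ℝ => |y| ^ n) μ)
    (P : Polynomial ℝ) : Integrable (fun y => P.eval y) μ := by
  induction P using Polynomial.induction_on' with
  | add P Q hP hQ =>
    simp only [Polynomial.eval_add]
    exact hP.add hQ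
  | monomial n r =>
    simp only [Polynomial.eval_monomial]
    refine Integrable.const_mul ?_ r
    refine (hmom n).mono' (by fun_prop) (Filter.Eventually.of_forall fun y => ?_)
    simp

lemma rec_poly (a b c : ℕ → ℝ) (ha : ∀ n, 0 < a n) (p : ℕ → ℝ → ℝ)
    (hp0 : ∀ y : ℝ, p 0 y = 1)
    (hprec : ∀ (n : ℕ) (y : ℝ), y * p n y = a n * p (n + 1) y + b n * p n y + c n * p (n - 1) y)
    (n : ℕ) : ∃ P : Polynomial ℝ, ∀ y, p n y = P.eval y := by
  induction n using Nat.strong_induction_on with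
  | _ n ih =>
    cases n with
    | zero => exact ⟨1, fun y => by simp [hp0]⟩
    | succ n =>
      obtain ⟨P, hP⟩ := ih n (by omega)
      obtain ⟨Q, hQ⟩ := ih (n - 1) (by omega)
      refine ⟨Polynomial.C (a n)⁻¹ * (Polynomial.X * P - Polynomial.C (b n) * P
        - Polynomial.C (c n) * Q), fun y => ?_⟩
      have e := (ha n).ne'
      have h1 := hprec n y
      simp only [Polynomial.eval_mul, Polynomial.eval_sub, Polynomial.eval_C, Polynomial.eval_X,
        ← hP, ← hQ]
      field_simp
      linarith

/-- The functions of the second kind. -/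
lemma second_kind (a b c h : ℕ → ℝ) (ha : ∀ n, 0 < a n) (hb0 : b 0 = 0) (hc0 : c 0 = 0)
    (hh : ∀ n, 0 < h n) (hh0 : h 0 = 1) (hrel : ∀ n, h (n + 1) * a n = h n * c (n + 1))
    (p : ℕ → ℝ → ℝ)
    (hp0 : ∀ y : ℝ, p 0 y = 1)
    (hprec : ∀ (n : ℕ) (y : ℝ), y * p n y = a n * p (n + 1) y + b n * p n y + c n * p (n - 1) y)
    (μ : Measure ℝ) [IsProbabilityMeasure μ]
    (hmom : ∀ n : ℕ, Integrable (fun y : ℝ => |y| ^ n) μ)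
    (horth : ∀ m n : ℕ, m ≠ n → ∫ y, p m y * p n y ∂μ = 0)
    (z : ℂ) (hz : z.im ≠ 0) :
    ∃ Φ : ℕ → ℂ,
      Φ 0 = ∫ y : ℝ, ((y : ℂ) - z)⁻¹ ∂μ ∧
      a 0 * Φ 1 = 1 + z * Φ 0 ∧
      (∀ n, z * Φ (n + 1) = a (n + 1) * Φ (n + 2) + b (n + 1) * Φ (n + 1) + c (n + 1) * Φ n) ∧
      Summable fun n => ‖Φ n‖ ^ 2 / h n := by
  choose P hP using rec_poly a b c ha p hp0 hprec
  have hpi : ∀ n, Integrable (p n) μ := by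
    intro n
    have : p n = fun y => (P n).eval y := by ext y; exact hP n y
    rw [this]
    exact poly_integrable μ hmom _
  have hint : ∀ m n, Integrable (fun y => p m y * p n y) μ := by
    intro m n
    have : (fun y => p m y * p n y) = fun y => (P m * P n).eval y := by
      ext y; rw [hP m y, hP n y, Polynomial.eval_mul]
    rw [this]
    exact poly_integrable μ hmom _
  have hn : ∀ n, ∫ y, p n y * p n y ∂μ = h n := by
    intro n
    induction n with
    | zero => simp [hp0, hh0]
    | succ n ih =>
      have e1 : ∫ y, y * p n y * p (n + 1) y ∂μ = a n * ∫ y, p (n + 1) y * p (n + 1) y ∂μ := by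
        have : (fun y => y * p n y * p (n + 1) y) = fun y => a n * (p (n + 1) y * p (n + 1) y)
            + (b n * (p n y * p (n + 1) y) + c n * (p (n - 1) y * p (n + 1) y)) := by
          ext y; rw [hprec n y]; ring
        rw [this, integral_lin3 μ _ _ _ _ _ _ (hint _ _) (hint _ _) (hint _ _),
          horth n (n + 1) (by omega), horth (n - 1) (n + 1) (by omega)]
        ring
      have e2 : ∫ y, y * p n y * p (n + 1) y ∂μ = c (n + 1) * ∫ y, p n y * p n y ∂μ := by
        have : (fun y => y * p n y * p (n + 1) y) = fun y => a (n + 1) * (p (n + 2) y * p n y)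
            + (b (n + 1) * (p (n + 1) y * p n y) + c (n + 1) * (p n y * p n y)) := by
          ext y
          have := hprec (n + 1) y
          simp only [Nat.add_sub_cancel] at this
          linear_combination p n y * this
        rw [this, integral_lin3 μ _ _ _ _ _ _ (hint _ _) (hint _ _) (hint _ _),
          horth (n + 2) n (by omega), horth (n + 1) n (by omega)]
        ring
      have e3 := hrel n
      have e4 := (ha n).ne'
      rw [e2, ih] at e1
      apply mul_left_cancel₀ e4
      linarith
  have hp1 : ∀ n, ∫ y, p (n + 1) y ∂μ = 0 := by
    intro n
    have := horth (n + 1) 0 (by omega)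
    simpa [hp0] using this
  have hne : ∀ y : ℝ, (y : ℂ) - z ≠ 0 := by
    intro y hy
    apply hz
    have := congrArg Complex.im hy
    simpa using this
  have hcont : Continuous fun y : ℝ => ((y : ℂ) - z)⁻¹ :=
    Continuous.inv₀ (by fun_prop) hne
  have hbd : ∀ y : ℝ, ‖((y : ℂ) - z)⁻¹‖ ≤ |z.im|⁻¹ := by
    intro y
    rw [norm_inv]
    have h1 := Complex.abs_im_le_norm ((y : ℂ) - z)
    have h2 : |z.im| ≤ ‖(y : ℂ) - z‖ := by simpa using h1
    have := abs_pos.2 hz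
    gcongr
  have hΦi : ∀ n, Integrable (fun y : ℝ => ((y : ℂ) - z)⁻¹ * (p n y : ℂ)) μ := fun n =>
    (hpi n).ofReal.bdd_mul hcont.aestronglyMeasurable (Filter.Eventually.of_forall hbd)
  have hmul : ∀ n, ∫ y : ℝ, ((y : ℂ) - z)⁻¹ * ((y * p n y : ℝ) : ℂ) ∂μ
      = ((∫ y, p n y ∂μ : ℝ) : ℂ) + z * ∫ y : ℝ, ((y : ℂ) - z)⁻¹ * (p n y : ℂ) ∂μ := by
    intro n
    have e : (fun y : ℝ => ((y : ℂ) - z)⁻¹ * ((y * p n y : ℝ) : ℂ))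
        = fun y : ℝ => (p n y : ℂ) + z * (((y : ℂ) - z)⁻¹ * (p n y : ℂ)) := by
      ext y
      have := hne y
      push_cast
      field_simp
      ring
    have hpc : Integrable (fun y : ℝ => (p n y : ℂ)) μ := (hpi n).ofReal
    rw [e, integral_add hpc ((hΦi n).const_mul z), integral_const_mul, integral_complex_ofReal]
  have hrecΦ : ∀ n, ∫ y : ℝ, ((y : ℂ) - z)⁻¹ * ((y * p n y : ℝ) : ℂ) ∂μ
      = a n * (∫ y : ℝ, ((y : ℂ) - z)⁻¹ * (p (n + 1) y : ℂ) ∂μ)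
        + (b n * (∫ y : ℝ, ((y : ℂ) - z)⁻¹ * (p n y : ℂ) ∂μ)
        + c n * (∫ y : ℝ, ((y : ℂ) - z)⁻¹ * (p (n - 1) y : ℂ) ∂μ)) := by
    intro n
    have e : (fun y : ℝ => ((y : ℂ) - z)⁻¹ * ((y * p n y : ℝ) : ℂ))
        = fun y : ℝ => a n * (((y : ℂ) - z)⁻¹ * (p (n + 1) y : ℂ))
        + (b n * (((y : ℂ) - z)⁻¹ * (p n y : ℂ)) + c n * (((y : ℂ) - z)⁻¹ * (p (n - 1) y : ℂ))) := by
      ext y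
      rw [hprec n y]
      push_cast
      ring
    rw [e, integral_lin3 μ _ _ _ _ _ _ (hΦi _) (hΦi _) (hΦi _)]
  refine ⟨fun n => ∫ y : ℝ, ((y : ℂ) - z)⁻¹ * (p n y : ℂ) ∂μ, by simp [hp0], ?_, ?_, ?_⟩
  · have h1 := hmul 0
    rw [hrecΦ 0] at h1
    have h2 : ∫ y, p 0 y ∂μ = 1 := by simp [hp0]
    rw [h2, hb0, hc0] at h1
    simpa using h1
  · intro n
    have h1 := hmul (n + 1)
    rw [hrecΦ (n + 1), hp1] at h1
    simp only [Nat.add_sub_cancel, Complex.ofReal_zero, zero_add] at h1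
    simp only
    rw [← h1]
    ring
  · have s1 := bessel μ p h hh hpi hint horth hn (fun y : ℝ => (((y : ℂ) - z)⁻¹).re)
      (Complex.continuous_re.comp hcont) _ (fun y => (Complex.abs_re_le_norm _).trans (hbd y))
    have s2 := bessel μ p h hh hpi hint horth hn (fun y : ℝ => (((y : ℂ) - z)⁻¹).im)
      (Complex.continuous_im.comp hcont) _ (fun y => (Complex.abs_im_le_norm _).trans (hbd y))
    refine (s1.add s2).congr fun n => ?_
    have r1 : (∫ y : ℝ, ((y : ℂ) - z)⁻¹ * (p n y : ℂ) ∂μ).re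
        = ∫ y : ℝ, (((y : ℂ) - z)⁻¹).re * p n y ∂μ := by
      have := integral_re (hΦi n)
      simp only [RCLike.re_eq_complex_re, Complex.re_mul_ofReal] at this
      exact this.symm
    have r2 : (∫ y : ℝ, ((y : ℂ) - z)⁻¹ * (p n y : ℂ) ∂μ).im
        = ∫ y : ℝ, (((y : ℂ) - z)⁻¹).im * p n y ∂μ := by
      have := integral_im (hΦi n)
      simp only [RCLike.im_eq_complex_im, Complex.im_mul_ofReal] at this
      exact this.symm
    rw [Complex.sq_norm, Complex.normSq_apply, r1, r2]
    ring

lemma stieltjes_unique (μ ν : Measure ℝ) [IsProbabilityMeasure μ] [IsProbabilityMeasure ν]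
    (H : ∀ z : ℂ, z.im ≠ 0 → ∫ y : ℝ, ((y : ℂ) - z)⁻¹ ∂μ = ∫ y : ℝ, ((y : ℂ) - z)⁻¹ ∂ν) :
    μ = ν := by
  refine poisson_unique μ ν fun x ε hε => ?_
  have key : ∀ (ρ : Measure ℝ) [IsProbabilityMeasure ρ],
      ∫ y, ε / ((y - x) ^ 2 + ε ^ 2) ∂ρ = (∫ y : ℝ, ((y : ℂ) - ⟨x, ε⟩)⁻¹ ∂ρ).im := by
    intro ρ _
    have hne : ∀ y : ℝ, (y : ℂ) - ⟨x, ε⟩ ≠ 0 := by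
      intro y hy
      have := congrArg Complex.im hy
      simp at this
      exact hε.ne' this
    have hcont : Continuous fun y : ℝ => ((y : ℂ) - ⟨x, ε⟩)⁻¹ :=
      Continuous.inv₀ (by fun_prop) hne
    have hi : Integrable (fun y : ℝ => ((y : ℂ) - ⟨x, ε⟩)⁻¹) ρ := by
      refine Integrable.of_bound (C := ε⁻¹) hcont.aestronglyMeasurable
        (Filter.Eventually.of_forall fun y => ?_)
      rw [norm_inv]
      have h1 := Complex.abs_im_le_norm ((y : ℂ) - ⟨x, ε⟩)
      have h2 : ε ≤ ‖(y : ℂ) - ⟨x, ε⟩‖ := by simpa [abs_of_pos hε] using h1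
      gcongr
    have := integral_im hi
    simp only [RCLike.im_eq_complex_im] at this
    rw [← this]
    congr 1
    ext y
    rw [Complex.inv_im, Complex.normSq_apply]
    simp
    ring
  rw [key μ, key ν, H _ (by simpa using hε.ne')]

lemma qnum_le_nat (q : ℝ) (hq0 : 0 ≤ q) (hq1 : q ≤ 1) (n : ℕ) : qnum q n ≤ n := by
  unfold qnum
  calc _ ≤ ∑ i ∈ Finset.range n, (1 : ℝ) := Finset.sum_le_sum fun i _ => pow_le_one₀ hq0 hq1
    _ = n := by simp

lemma qnum_nonneg (q : ℝ) (hq0 : 0 ≤ q) (n : ℕ) : 0 ≤ qnum q n :=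
  Finset.sum_nonneg fun i _ => pow_nonneg hq0 i

lemma qnum_succ_pos (q : ℝ) (hq0 : 0 ≤ q) (n : ℕ) : 0 < qnum q (n + 1) := by
  unfold qnum
  rw [Finset.sum_range_succ']
  have : 0 ≤ ∑ i ∈ Finset.range n, q ^ (i + 1) := Finset.sum_nonneg fun i _ => pow_nonneg hq0 _
  simp
  linarith

lemma qnum_bdd (q : ℝ) (hq0 : 0 ≤ q) (hq1 : q < 1) (n : ℕ) : qnum q n ≤ (1 - q)⁻¹ := by
  unfold qnum
  rw [← tsum_geometric_of_lt_one hq0 hq1]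
  exact (summable_geometric_of_lt_one hq0 hq1).sum_le_tsum _ fun i _ => pow_nonneg hq0 i

lemma div_all (η θ τ q t : ℝ)
    (hq0 : 0 ≤ q) (hq1 : q ≤ 1) (hη : 0 < η) (hθ : 0 ≤ θ) (hτ : 0 ≤ τ) (ht : 0 < t)
    (h s : ℕ → ℝ) (ha : ∀ n, 0 < aCoef η θ τ q n) (hc : ∀ n, 0 < cCoef η τ q t (n + 1))
    (hh : ∀ n, 0 < h n)
    (hrel : ∀ n, h (n + 1) * aCoef η θ τ q n = h n * cCoef η τ q t (n + 1))
    (hs0 : s 0 = 0) (hs : ∀ n, s (n + 1) = s n + h n / aCoef η θ τ q n)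
    (h1 : Summable fun n => 1 / h n) (h2 : Summable fun n => s n ^ 2 / h n) : False := by
  have hη' : 0 < η⁻¹ := inv_pos.2 hη
  rcases hq1.lt_or_eq with hlt | rfl
  · set B := (1 - q)⁻¹ with hB
    have hB0 : 0 < B := inv_pos.2 (by linarith)
    have hqB : ∀ n, qnum q n ≤ B := qnum_bdd q hq0 hlt
    have hqn : ∀ n, 0 ≤ qnum q n := qnum_nonneg q hq0
    refine div_case1 _ _ h s ha hc hh hrel hs0 hs
      ((η⁻¹ + θ * B + B ^ 2 * η * τ) + η * (t + τ * B) * B) (by positivity) ?_ ?_ h1 h2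
    · intro n
      have e1 : aCoef η θ τ q n ≤ η⁻¹ + θ * B + B ^ 2 * η * τ := by
        unfold aCoef
        have := hqn n
        gcongr <;> exact hqB n
      have e2 : 0 ≤ η * (t + τ * B) * B := by positivity
      refine (e1.trans (le_add_of_nonneg_right e2)).trans (le_mul_of_one_le_right (by positivity) ?_)
      simp
    · intro n
      have e1 : cCoef η τ q t (n + 1) ≤ η * (t + τ * B) * B := by
        unfold cCoef
        have := hqn (n + 1)
        have := hqn (n + 1 - 1)
        gcongr <;> exact hqB _
      have e2 : 0 ≤ η⁻¹ + θ * B + B ^ 2 * η * τ := by positivity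
      refine (e1.trans (le_add_of_nonneg_left e2)).trans (le_mul_of_one_le_right (by positivity) ?_)
      simp
  · have hq : ∀ n, qnum 1 n = n := by intro n; simp [qnum]
    rcases hτ.eq_or_lt with rfl | hτ
    · refine div_case1 _ _ h s ha hc hh hrel hs0 hs (η⁻¹ + θ + η * t) (by positivity) ?_ ?_ h1 h2
      · intro n
        unfold aCoef
        rw [hq]
        have : (0 : ℝ) ≤ n := by positivity
        have := mul_nonneg hη'.le this
        have : 0 ≤ η * t * (n + 1) := by positivity
        nlinarith
      · intro n
        unfold cCoef
        rw [hq, hq]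
        push_cast
        have : 0 ≤ (η⁻¹ + θ) * ((n : ℝ) + 1) := by positivity
        nlinarith
    · set δ := min η⁻¹ (η * τ) / 2 with hδ
      have hδ0 : 0 < δ := by positivity
      refine div_case2 _ _ h s ha hc hh hrel hs0 hs (η⁻¹ + θ + η * τ) (η * (t + τ) / δ)
        (by positivity) (by positivity) ?_ ?_ h1 h2
      · intro n
        unfold aCoef
        rw [hq]
        have hn : (0 : ℝ) ≤ n := by positivity
        have e1 : η⁻¹ * 1 ≤ η⁻¹ * ((n : ℝ) + 1) ^ 2 := by gcongr; nlinarith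
        have e2 : θ * n ≤ θ * ((n : ℝ) + 1) ^ 2 := by gcongr; nlinarith
        have e3 : (η * τ) * n ^ 2 ≤ (η * τ) * ((n : ℝ) + 1) ^ 2 := by gcongr; linarith
        linarith
      · intro n
        have hn : (0 : ℝ) ≤ n := by positivity
        have d1 : 2 * δ ≤ η⁻¹ := by rw [hδ]; linarith [min_le_left η⁻¹ (η * τ)]
        have d2 : 2 * δ ≤ η * τ := by rw [hδ]; linarith [min_le_right η⁻¹ (η * τ)]
        have e1 : δ * ((n : ℝ) + 1) ^ 2 ≤ aCoef η θ τ 1 n := by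
          unfold aCoef
          rw [hq]
          have f1 : 0 ≤ θ * n := by positivity
          have f2 : 2 * δ * (n : ℝ) ^ 2 ≤ η * τ * (n : ℝ) ^ 2 := by gcongr
          nlinarith [mul_nonneg hδ0.le (sq_nonneg ((n : ℝ) - 1))]
        have e2 : cCoef η τ 1 t (n + 1) ≤ aCoef η θ τ 1 n + η * (t + τ) * (n + 1) := by
          unfold cCoef aCoef
          rw [hq, hq, hq]
          simp only [Nat.add_sub_cancel]
          push_cast
          have f1 : 0 ≤ θ * n := by positivity
          have f3 : 0 ≤ η * τ := by positivity
          nlinarith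
        refine e2.trans ?_
        rw [mul_add (aCoef η θ τ 1 n), mul_one]
        refine add_le_add le_rfl ?_
        calc η * (t + τ) * ((n : ℝ) + 1)
            = δ * ((n : ℝ) + 1) ^ 2 * (η * (t + τ) / δ / (n + 1)) := by field_simp
          _ ≤ _ := by gcongr

/-- for `0 ≤ q ≤ 1`, `η > 0`, `θ ≥ 0`, `τ ≥ 0`, `t > 0`, any two probability
measures on `ℝ` with finite moments of all orders that are orthogonality measures of the
polynomials `{p_n(·;t)}` coincide: the orthogonality measure is determined by moments. -/
theorem stmt11 (η θ τ q t : ℝ)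
    (hq0 : 0 ≤ q) (hq1 : q ≤ 1) (hη : 0 < η) (hθ : 0 ≤ θ) (hτ : 0 ≤ τ) (ht : 0 < t)
    (p : ℕ → ℝ → ℝ)
    (hp0 : ∀ y : ℝ, p 0 y = 1)
    (hprec : ∀ (n : ℕ) (y : ℝ), y * p n y =
      aCoef η θ τ q n * p (n + 1) y + bCoef η θ τ q t n * p n y
        + cCoef η τ q t n * p (n - 1) y)
    (μ₁ μ₂ : Measure ℝ)
    (hprob₁ : IsProbabilityMeasure μ₁) (hprob₂ : IsProbabilityMeasure μ₂)
    (hmom₁ : ∀ n : ℕ, Integrable (fun y : ℝ => |y| ^ n) μ₁)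
    (hmom₂ : ∀ n : ℕ, Integrable (fun y : ℝ => |y| ^ n) μ₂)
    (horth₁ : ∀ m n : ℕ, m ≠ n → ∫ y, p m y * p n y ∂μ₁ = 0)
    (horth₂ : ∀ m n : ℕ, m ≠ n → ∫ y, p m y * p n y ∂μ₂ = 0) :
    μ₁ = μ₂ := by
  have hη' : 0 < η⁻¹ := inv_pos.2 hη
  have ha : ∀ n, 0 < aCoef η θ τ q n := by
    intro n
    have := qnum_nonneg q hq0 n
    unfold aCoef
    positivity
  have hc : ∀ n, 0 < cCoef η τ q t (n + 1) := by
    intro n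
    have := qnum_nonneg q hq0 (n + 1 - 1)
    have := qnum_succ_pos q hq0 n
    unfold cCoef
    positivity
  have hb0 : bCoef η θ τ q t 0 = 0 := by simp [bCoef, qnum]
  have hc0 : cCoef η τ q t 0 = 0 := by simp [cCoef, qnum]
  have habc : ∀ n, aCoef η θ τ q n - bCoef η θ τ q t n + cCoef η τ q t n = η⁻¹ := by
    intro n
    unfold aCoef bCoef cCoef
    ring
  set a := aCoef η θ τ q with hadef
  set b := bCoef η θ τ q t with hbdef
  set c := cCoef η τ q t with hcdef
  set h : ℕ → ℝ := fun n => ∏ k ∈ Finset.range n, (c (k + 1) / a k) with hhdef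
  have hh : ∀ n, 0 < h n := fun n => Finset.prod_pos fun k _ => div_pos (hc k) (ha k)
  have hh0 : h 0 = 1 := by simp [hhdef]
  have hrel : ∀ n, h (n + 1) * a n = h n * c (n + 1) := by
    intro n
    have := (ha n).ne'
    simp only [hhdef, Finset.prod_range_succ]
    field_simp
  set s : ℕ → ℝ := fun n => ∑ k ∈ Finset.range n, h k / a k with hsdef
  have hs0 : s 0 = 0 := by simp [hsdef]
  have hs : ∀ n, s (n + 1) = s n + h n / a n := fun n => by
    simp only [hsdef, Finset.sum_range_succ]
  refine stieltjes_unique μ₁ μ₂ fun z hz => ?_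
  by_contra hne
  obtain ⟨f, f0, f1, f2, f3⟩ := second_kind a b c h ha hb0 hc0 hh hh0 hrel p hp0 hprec μ₁
    hmom₁ horth₁ z hz
  obtain ⟨g, g0, g1, g2, g3⟩ := second_kind a b c h ha hb0 hc0 hh hh0 hrel p hp0 hprec μ₂
    hmom₂ horth₂ z hz
  have hW : f 0 * g 1 - f 1 * g 0 ≠ 0 := by
    intro h0
    apply hne
    rw [← f0, ← g0]
    linear_combination (a 0 : ℂ) * h0 - f 0 * g1 + g 0 * f1
  have u1 := limit_circle a b c h ha hh hrel z ((-η⁻¹ : ℝ) : ℂ) f g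
    (fun n => (((-1) ^ n : ℝ) : ℂ)) f2 g2 (fun n => by
      have := habc (n + 1)
      have e1 : (a (n + 1) : ℂ) - b (n + 1) + c (n + 1) = (η : ℂ)⁻¹ := by exact_mod_cast this
      push_cast
      linear_combination ((-1) ^ n : ℂ) * (-e1)) hW f3 g3
  have u2 := limit_circle a b c h ha hh hrel z ((-η⁻¹ : ℝ) : ℂ) f g
    (fun n => (((-1) ^ n * s n : ℝ) : ℂ)) f2 g2 (fun n => by
      have e1 := habc (n + 1)
      have e2 : a (n + 1) * s (n + 2) = a (n + 1) * s (n + 1) + h (n + 1) := by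
        rw [hs (n + 1)]
        have := (ha (n + 1)).ne'
        field_simp
      have e3 : c (n + 1) * s (n + 1) = c (n + 1) * s n + h (n + 1) := by
        have := (ha n).ne'
        have e4 : h (n + 1) = h n * c (n + 1) / a n := by
          rw [eq_div_iff this]; exact hrel n
        rw [hs n, e4]
        field_simp
      have d1 : (a (n + 1) : ℂ) - b (n + 1) + c (n + 1) = (η : ℂ)⁻¹ := by exact_mod_cast e1
      have d2 : (a (n + 1) : ℂ) * s (n + 2) = a (n + 1) * s (n + 1) + h (n + 1) := by
        exact_mod_cast e2
      have d3 : (c (n + 1) : ℂ) * s (n + 1) = c (n + 1) * s n + h (n + 1) := by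
        exact_mod_cast e3
      push_cast
      linear_combination ((-1) ^ n : ℂ) * (-s (n + 1) * d1 - d2 + d3)) hW f3 g3
  refine div_all η θ τ q t hq0 hq1 hη hθ hτ ht h s ha hc hh hrel hs0 hs ?_ ?_
  · refine u1.congr fun n => ?_
    simp
  · refine u2.congr fun n => ?_
    simp
end
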